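/- Let f : 𝕊 → ℂ be continuous with f(z) ≠ 0 for all z ∈ 𝕊, and assume that ∑_{k∈ℤ} |f̂_k| < ∞. Then there exist an integer κ, a continuous map F₊ : 𝔻̄ → ℂ which is holomorphic on 𝔻, nowhere vanishing on 𝔻̄, and whose restriction to 𝕊 has absolutely summable Fourier coefficients, and a continuous map F₋ : {z ∈ ℂ : |z| ≥ 1} → ℂ which is holomorphic on {z : |z| > 1}, nowhere vanishing, has a nonzero limit F₋(∞) as |z| → ∞, and whose restriction to 𝕊 has absolutely summable Fourier coefficients, such that f(z) = F₊(z)·z^κ·F₋(z) for all z ∈ 𝕊. Moreover, the integer κ is uniquely determined by f. -/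

import Mathlib

open Metric Filter

/-- The `k`-th Fourier coefficient `∫₀¹ f(e^{2πit}) e^{−2πikt} dt` of a function on the
unit circle (given as a function on `ℂ`, only its values on the circle matter). -/
noncomputable def circleFourierCoeff (f : ℂ → ℂ) (k : ℤ) : ℂ :=
  ∫ t in (0:ℝ)..1,
    f (Complex.exp (2 * (Real.pi : ℂ) * Complex.I * (t : ℂ))) *
      Complex.exp (-(2 * (Real.pi : ℂ) * Complex.I * (k : ℂ) * (t : ℂ)))

/-- A scalar Birkhoff decomposition `f = F₊ · z^κ · F₋` on the unit circle, where `F₊` is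
continuous on the closed unit disk, holomorphic on the open disk, nowhere vanishing, with
absolutely summable boundary Fourier coefficients, and `F₋` is continuous on `{|z| ≥ 1}`,
holomorphic on `{|z| > 1}`, nowhere vanishing, with a nonzero limit at `∞` and absolutely
summable boundary Fourier coefficients. -/
def WienerScalarFactorization (f : ℂ → ℂ) (κ : ℤ) : Prop :=
  ∃ Fp Fm : ℂ → ℂ, ∃ L : ℂ,
    ContinuousOn Fp (closedBall 0 1) ∧
    DifferentiableOn ℂ Fp (ball 0 1) ∧
    (∀ z ∈ closedBall (0 : ℂ) 1, Fp z ≠ 0) ∧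
    Summable (fun k : ℤ => ‖circleFourierCoeff Fp k‖) ∧
    ContinuousOn Fm {z : ℂ | 1 ≤ ‖z‖} ∧
    DifferentiableOn ℂ Fm {z : ℂ | 1 < ‖z‖} ∧
    (∀ z : ℂ, 1 ≤ ‖z‖ → Fm z ≠ 0) ∧
    L ≠ 0 ∧
    Tendsto Fm (comap (fun z : ℂ => ‖z‖) atTop) (nhds L) ∧
    Summable (fun k : ℤ => ‖circleFourierCoeff Fm k‖) ∧
    ∀ z : ℂ, ‖z‖ = 1 → f z = Fp z * z ^ κ * Fm z


open scoped ENNReal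

section FourierAux

lemma wEexp_zpow (t : ℝ) (k : ℤ) :
    Complex.exp (2 * (Real.pi : ℂ) * Complex.I * (t : ℂ)) ^ k
      = Complex.exp (2 * (Real.pi : ℂ) * Complex.I * (k : ℂ) * (t : ℂ)) := by
  rw [← Complex.exp_int_mul]; congr 1; ring

lemma wEexp_norm (t : ℝ) : ‖Complex.exp (2 * (Real.pi : ℂ) * Complex.I * (t : ℂ))‖ = 1 := by
  have : 2 * (Real.pi : ℂ) * Complex.I * (t : ℂ) = ((2 * Real.pi * t : ℝ) : ℂ) * Complex.I := by
    push_cast; ring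
  rw [this, Complex.norm_exp_ofReal_mul_I]

lemma wEint (m : ℤ) : (∫ t in (0:ℝ)..1,
    Complex.exp (2 * (Real.pi : ℂ) * Complex.I * (m : ℂ) * (t : ℂ))) = if m = 0 then 1 else 0 := by
  split_ifs with h
  · simp [h]
  · have hc : 2 * (Real.pi : ℂ) * Complex.I * (m : ℂ) ≠ 0 := by
      simp [Complex.I_ne_zero, Real.pi_ne_zero, h]
    rw [integral_exp_mul_complex hc]
    have : Complex.exp (2 * (Real.pi : ℂ) * Complex.I * (m : ℂ) * ((1 : ℝ) : ℂ)) = 1 := by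
      rw [Complex.exp_eq_one_iff]; exact ⟨m, by push_cast; ring⟩
    rw [this]; simp

lemma circleFourierCoeff_of_series (a : ℤ → ℂ) (ha : Summable fun k => ‖a k‖) (F : ℂ → ℂ)
    (hF : ∀ z : ℂ, ‖z‖ = 1 → F z = ∑' k : ℤ, a k * z ^ k) (n : ℤ) :
    circleFourierCoeff F n = a n := by
  unfold circleFourierCoeff
  let g : ℤ → C(ℝ, ℂ) := fun k =>
    ⟨fun t => a k * Complex.exp (2 * (Real.pi : ℂ) * Complex.I * ((k - n : ℤ) : ℂ) * (t : ℂ)),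
      by fun_prop⟩
  have hgn : ∀ k t, ‖g k t‖ ≤ ‖a k‖ := by
    intro k t
    change ‖a k * Complex.exp _‖ ≤ _
    rw [← wEexp_zpow, norm_mul, norm_zpow, wEexp_norm]; simp
  have hs := intervalIntegral.hasSum_intervalIntegral_of_summable_norm (a := 0) (b := 1) (f := g)
    (by
      refine Summable.of_nonneg_of_le (fun _ => norm_nonneg _) (fun k => ?_) ha
      rw [ContinuousMap.norm_le _ (norm_nonneg _)]
      intro x; exact hgn k x)
  have h1 : ∀ k, (∫ x in (0:ℝ)..1, g k x) = if k = n then a n else 0 := by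
    intro k
    change (∫ x in (0:ℝ)..1, a k * Complex.exp _) = _
    rw [intervalIntegral.integral_const_mul, wEint]
    by_cases h : k = n
    · simp [h]
    · simp [h, sub_eq_zero]
  simp_rw [h1] at hs
  have h2 := hs.unique (hasSum_ite_eq n (a n))
  rw [← h2]
  refine intervalIntegral.integral_congr fun t _ => ?_
  rw [hF _ (wEexp_norm t), ← tsum_mul_right]
  refine tsum_congr fun k => ?_
  change _ = a k * Complex.exp _
  rw [wEexp_zpow, mul_assoc, ← Complex.exp_add]
  congr 2; push_cast; ring

lemma exists_wE (z : ℂ) (hz : ‖z‖ = 1) :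
    ∃ t : ℝ, z = Complex.exp (2 * (Real.pi : ℂ) * Complex.I * (t : ℂ)) := by
  refine ⟨z.arg / (2 * Real.pi), ?_⟩
  have h := Complex.norm_mul_exp_arg_mul_I z
  rw [hz] at h
  simp only [Complex.ofReal_one, one_mul] at h
  have : (Real.pi : ℂ) ≠ 0 := by simp [Real.pi_ne_zero]
  refine h.symm.trans ?_
  congr 1; push_cast; field_simp

lemma series_of_summable (f : ℂ → ℂ) (hfc : ContinuousOn f {z : ℂ | ‖z‖ = 1})
    (hW : Summable fun k : ℤ => ‖circleFourierCoeff f k‖) (z : ℂ) (hz : ‖z‖ = 1) :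
    f z = ∑' k : ℤ, circleFourierCoeff f k * z ^ k := by
  have : Fact ((0:ℝ) < 1) := ⟨one_pos⟩
  have hc : Continuous fun x : AddCircle (1:ℝ) => f (AddCircle.toCircle x : ℂ) := by
    refine hfc.comp_continuous (by fun_prop) (fun x => Circle.norm_coe _)
  let g : C(AddCircle (1:ℝ), ℂ) := ⟨_, hc⟩
  have htc : ∀ t : ℝ, ((AddCircle.toCircle (t : AddCircle (1:ℝ)) : Circle) : ℂ)
      = Complex.exp (2 * (Real.pi : ℂ) * Complex.I * (t : ℂ)) := by
    intro t
    rw [AddCircle.toCircle_apply_mk, Circle.coe_exp]; congr 1; push_cast; ring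
  have hco : ∀ k, fourierCoeff g k = circleFourierCoeff f k := by
    intro k
    rw [fourierCoeff_eq_intervalIntegral g k 0]
    unfold circleFourierCoeff
    simp only [div_one, one_smul, zero_add]
    refine intervalIntegral.integral_congr fun t _ => ?_
    simp only [fourier_coe_apply, smul_eq_mul]
    change _ * f _ = _
    rw [htc, mul_comm]; congr 2; push_cast; ring
  obtain ⟨t, rfl⟩ := exists_wE z hz
  have := has_pointwise_sum_fourier_series_of_summable (f := g)
    (by simp_rw [funext hco]; exact hW.of_norm) (t : AddCircle (1:ℝ))
  have e : g (t : AddCircle (1:ℝ)) = f (Complex.exp (2 * (Real.pi : ℂ) * Complex.I * (t : ℂ))) := by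
    change f _ = _
    rw [htc]
  rw [← e, ← this.tsum_eq]
  refine tsum_congr fun k => ?_
  rw [hco, wEexp_zpow, fourier_coe_apply, smul_eq_mul]; simp

end FourierAux

section WienerAlgebra

/-- The Wiener algebra, realised as `ℓ¹(ℤ)` (with convolution product, defined below). -/
def WAlg : Type := lp (fun _ : ℤ => ℂ) 1

namespace WAlg

noncomputable instance : NormedAddCommGroup WAlg :=
  inferInstanceAs (NormedAddCommGroup (lp (fun _ : ℤ => ℂ) 1))
noncomputable instance : NormedSpace ℂ WAlg :=
  inferInstanceAs (NormedSpace ℂ (lp (fun _ : ℤ => ℂ) 1))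
instance : CompleteSpace WAlg :=
  inferInstanceAs (CompleteSpace (lp (fun _ : ℤ => ℂ) 1))

/-- coefficients -/
def c (a : WAlg) (k : ℤ) : ℂ := (show lp (fun _ : ℤ => ℂ) 1 from a) k

/-- constructor -/
def mk (a : ℤ → ℂ) (ha : Summable fun k => ‖a k‖) : WAlg :=
  (⟨a, memℓp_gen (by simpa using ha)⟩ : lp (fun _ : ℤ => ℂ) 1)

@[simp] lemma c_mk (a : ℤ → ℂ) (ha : Summable fun k => ‖a k‖) (k : ℤ) : (mk a ha).c k = a k := rfl

lemma c_ext {a b : WAlg} (h : ∀ k, a.c k = b.c k) : a = b :=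
  lp.ext (funext h)

lemma summable_c (a : WAlg) : Summable fun k => ‖a.c k‖ := by
  have := (lp.memℓp (show lp (fun _ : ℤ => ℂ) 1 from a)).summable (by simp)
  simp only [ENNReal.toReal_one, Real.rpow_one] at this
  exact this

lemma norm_eq (a : WAlg) : ‖a‖ = ∑' k, ‖a.c k‖ := by
  have := lp.norm_eq_tsum_rpow (p := 1) (by simp) (show lp (fun _ : ℤ => ℂ) 1 from a)
  simp only [ENNReal.toReal_one, Real.rpow_one, div_one] at this
  exact this

@[simp] lemma c_add (a b : WAlg) (k : ℤ) : (a + b).c k = a.c k + b.c k := rfl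
@[simp] lemma c_smul (r : ℂ) (b : WAlg) (k : ℤ) : (r • b).c k = r * b.c k := rfl

/-- evaluation at a point of the circle, as a plain function -/
noncomputable def ev (z : ℂ) (a : WAlg) : ℂ := ∑' k : ℤ, a.c k * z ^ k

lemma norm_term {z : ℂ} (hz : ‖z‖ = 1) (a : WAlg) (k : ℤ) : ‖a.c k * z ^ k‖ = ‖a.c k‖ := by
  rw [norm_mul, norm_zpow, hz]; simp

lemma summable_norm_term {z : ℂ} (hz : ‖z‖ = 1) (a : WAlg) :
    Summable fun k => ‖a.c k * z ^ k‖ := by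
  simp_rw [norm_term hz]; exact a.summable_c

lemma summable_term {z : ℂ} (hz : ‖z‖ = 1) (a : WAlg) : Summable fun k => a.c k * z ^ k :=
  (a.summable_norm_term hz).of_norm

lemma coeff_of_ev (a : WAlg) (F : ℂ → ℂ) (hF : ∀ z : ℂ, ‖z‖ = 1 → F z = ev z a) (n : ℤ) :
    circleFourierCoeff F n = a.c n :=
  circleFourierCoeff_of_series a.c a.summable_c F hF n

lemma ev_ext {a b : WAlg} (h : ∀ z : ℂ, ‖z‖ = 1 → ev z a = ev z b) : a = b := by
  refine c_ext fun k => ?_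
  rw [← coeff_of_ev a (fun z => ev z a) (fun _ _ => rfl),
    ← coeff_of_ev b (fun z => ev z a) h]

lemma ev_add {z : ℂ} (hz : ‖z‖ = 1) (a b : WAlg) : ev z (a + b) = ev z a + ev z b := by
  unfold ev
  rw [← (a.summable_term hz).tsum_add (b.summable_term hz)]
  exact tsum_congr fun k => by rw [c_add, add_mul]

lemma ev_smul (z : ℂ) (r : ℂ) (a : WAlg) : ev z (r • a) = r * ev z a := by
  unfold ev
  rw [← tsum_mul_left]
  exact tsum_congr fun k => by rw [c_smul, mul_assoc]

lemma norm_ev_le {z : ℂ} (hz : ‖z‖ = 1) (a : WAlg) : ‖ev z a‖ ≤ ‖a‖ := by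
  rw [norm_eq]
  refine (norm_tsum_le_tsum_norm (a.summable_norm_term hz)).trans (le_of_eq ?_)
  exact tsum_congr fun k => norm_term hz a k

/-- the shear equivalence -/
def shear : ℤ × ℤ ≃ ℤ × ℤ where
  toFun p := (p.2, p.1 - p.2)
  invFun p := (p.1 + p.2, p.1)
  left_inv p := by simp
  right_inv p := by simp

lemma conv_summable {R : Type*} [NormedRing R] [CompleteSpace R] {f g : ℤ → R}
    (hf : Summable fun k => ‖f k‖) (hg : Summable fun k => ‖g k‖) :
    Summable fun p : ℤ × ℤ => f p.2 * g (p.1 - p.2) :=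
  shear.summable_iff.2 (summable_mul_of_summable_norm hf hg)

lemma conv_tsum {R : Type*} [NormedRing R] [CompleteSpace R] {f g : ℤ → R}
    (hf : Summable fun k => ‖f k‖) (hg : Summable fun k => ‖g k‖) :
    ∑' n : ℤ, ∑' k : ℤ, f k * g (n - k) = (∑' k, f k) * ∑' k, g k := by
  rw [tsum_mul_tsum_of_summable_norm hf hg, ← shear.tsum_eq]
  exact (conv_summable hf hg).tsum_prod.symm

lemma conv_norm_summable (a b : WAlg) :
    Summable fun p : ℤ × ℤ => ‖a.c p.2‖ * ‖b.c (p.1 - p.2)‖ :=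
  conv_summable (f := fun k => ‖a.c k‖) (g := fun k => ‖b.c k‖)
    (by simpa using a.summable_c) (by simpa using b.summable_c)

lemma conv_norm_le (a b : WAlg) (n : ℤ) :
    ‖∑' k : ℤ, a.c k * b.c (n - k)‖ ≤ ∑' k : ℤ, ‖a.c k‖ * ‖b.c (n - k)‖ := by
  have h := (conv_norm_summable a b).prod_factor n
  simp only [← norm_mul] at h ⊢
  exact norm_tsum_le_tsum_norm h

lemma mul_summable (a b : WAlg) : Summable fun n : ℤ => ‖∑' k : ℤ, a.c k * b.c (n - k)‖ :=
  Summable.of_nonneg_of_le (fun _ => norm_nonneg _) (conv_norm_le a b)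
    (conv_norm_summable a b).prod

noncomputable instance : Mul WAlg :=
  ⟨fun a b => mk (fun n => ∑' k : ℤ, a.c k * b.c (n - k)) (mul_summable a b)⟩

lemma c_mul (a b : WAlg) (n : ℤ) : (a * b).c n = ∑' k : ℤ, a.c k * b.c (n - k) := rfl

lemma norm_mul_le' (a b : WAlg) : ‖a * b‖ ≤ ‖a‖ * ‖b‖ := by
  rw [norm_eq, norm_eq a, norm_eq b, ← conv_tsum (f := fun k => ‖a.c k‖) (g := fun k => ‖b.c k‖)
    (by simpa using a.summable_c) (by simpa using b.summable_c)]
  exact Summable.tsum_le_tsum (conv_norm_le a b) (mul_summable a b) (conv_norm_summable a b).prod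

lemma ev_mul {z : ℂ} (hz : ‖z‖ = 1) (a b : WAlg) : ev z (a * b) = ev z a * ev z b := by
  have hz0 : z ≠ 0 := by rintro rfl; simp at hz
  unfold ev
  rw [← conv_tsum (a.summable_norm_term hz) (b.summable_norm_term hz)]
  refine tsum_congr fun n => ?_
  rw [c_mul, ← tsum_mul_right]
  refine tsum_congr fun k => ?_
  have : z ^ n = z ^ k * z ^ (n - k) := by rw [← zpow_add₀ hz0]; congr 1; ring
  rw [this]; ring

/-- the monomial `z ^ k` -/
noncomputable def mono (k : ℤ) : WAlg := (lp.single 1 k (1 : ℂ) : lp (fun _ : ℤ => ℂ) 1)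

lemma c_mono (k j : ℤ) : (mono k).c j = if j = k then 1 else 0 := by
  have : (mono k).c j = (Pi.single k (1 : ℂ) : ℤ → ℂ) j := rfl
  rw [this, Pi.single_apply]

@[simp] lemma ev_mono (z : ℂ) (k : ℤ) : ev z (mono k) = z ^ k := by
  unfold ev
  rw [tsum_eq_single k]
  · simp [c_mono]
  · intro j hj; simp [c_mono, hj]

lemma norm_mono (k : ℤ) : ‖mono k‖ = 1 := by
  have := lp.norm_single (E := fun _ : ℤ => ℂ) (p := 1) (by simp) k (1 : ℂ)
  rw [norm_one] at this
  exact this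

noncomputable instance : One WAlg := ⟨mono 0⟩

lemma ev_one (z : ℂ) : ev z 1 = 1 := by
  change ev z (mono 0) = 1
  simp

lemma ev_zero (z : ℂ) : ev z 0 = 0 := by
  have := ev_smul z 0 0
  simpa using this

noncomputable instance : NormedCommRing WAlg :=
  { (inferInstance : NormedAddCommGroup WAlg) with
    mul := (· * ·)
    one := 1
    left_distrib := fun a b c => ev_ext fun z hz => by
      simp only [ev_mul hz, ev_add hz, mul_add]
    right_distrib := fun a b c => ev_ext fun z hz => by
      simp only [ev_mul hz, ev_add hz, add_mul]
    zero_mul := fun a => ev_ext fun z hz => by simp only [ev_mul hz, ev_zero, zero_mul]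
    mul_zero := fun a => ev_ext fun z hz => by simp only [ev_mul hz, ev_zero, mul_zero]
    mul_assoc := fun a b c => ev_ext fun z hz => by simp only [ev_mul hz, mul_assoc]
    one_mul := fun a => ev_ext fun z hz => by simp only [ev_mul hz, ev_one, one_mul]
    mul_one := fun a => ev_ext fun z hz => by simp only [ev_mul hz, ev_one, mul_one]
    mul_comm := fun a b => ev_ext fun z hz => by simp only [ev_mul hz, mul_comm]
    norm_mul_le := norm_mul_le' }

noncomputable instance : NormedAlgebra ℂ WAlg :=
  { Algebra.ofModule
      (fun r a b => ev_ext fun z hz => by simp only [ev_mul hz, ev_smul, mul_assoc])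
      (fun r a b => ev_ext fun z hz => by simp only [ev_mul hz, ev_smul, mul_left_comm]) with
    norm_smul_le := fun r a => norm_smul_le r a }

instance : NormOneClass WAlg := ⟨norm_mono 0⟩

/-- evaluation as a ring hom -/
noncomputable def evHom (z : ℂ) (hz : ‖z‖ = 1) : WAlg →+* ℂ where
  toFun := ev z
  map_one' := ev_one z
  map_mul' := ev_mul hz
  map_zero' := ev_zero z
  map_add' := ev_add hz

lemma evHom_continuous (z : ℂ) (hz : ‖z‖ = 1) : Continuous (evHom z hz) :=
  AddMonoidHomClass.continuous_of_bound (evHom z hz) 1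
    (fun a => by rw [one_mul]; exact norm_ev_le hz a)

lemma ev_exp {z : ℂ} (hz : ‖z‖ = 1) (a : WAlg) :
    ev z (NormedSpace.exp a) = Complex.exp (ev z a) := by
  let _ : NormedAlgebra ℚ WAlg := NormedAlgebra.restrictScalars ℚ ℂ WAlg
  rw [Complex.exp_eq_exp_ℂ]
  exact NormedSpace.map_exp (evHom z hz) (evHom_continuous z hz) a

lemma hasSum_mono (a : WAlg) : HasSum (fun k => a.c k • mono k) a := by
  have := lp.hasSum_single (p := 1) (by simp) (show lp (fun _ : ℤ => ℂ) 1 from a)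
  refine Eq.mp ?_ this
  refine congrArg (fun g : ℤ → WAlg => HasSum g a) (funext fun k => c_ext fun j => Eq.symm ?_)
  change a.c k * (Pi.single k (1 : ℂ) : ℤ → ℂ) j = (Pi.single k (a.c k) : ℤ → ℂ) j
  by_cases h : j = k
  · subst h; simp
  · simp [h]

lemma mono_mul (j k : ℤ) : mono j * mono k = mono (j + k) := ev_ext fun z hz => by
  have hz0 : z ≠ 0 := by rintro rfl; simp at hz
  rw [ev_mul hz]; simp [zpow_add₀ hz0]

/-- Wiener's lemma -/
lemma isUnit_of_ev_ne_zero (a : WAlg) (h : ∀ z : ℂ, ‖z‖ = 1 → ev z a ≠ 0) : IsUnit a := by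
  by_contra hu
  obtain ⟨φ, hφ⟩ := WeakDual.CharacterSpace.exists_apply_eq_zero hu
  have hm : ∀ j k, φ (mono j) * φ (mono k) = φ (mono (j + k)) := by
    intro j k; rw [← map_mul, mono_mul]
  have h0 : φ (mono 0) = 1 := map_one φ
  have hle : ∀ k, ‖φ (mono k)‖ ≤ 1 := fun k =>
    (AlgHom.norm_apply_le_self φ (mono k)).trans (norm_mono k).le
  have hz0 : φ (mono 1) ≠ 0 := by
    intro h1; have := hm 1 (-1); rw [h1] at this; simp [h0] at this
  have hz : ‖φ (mono 1)‖ = 1 := by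
    refine le_antisymm (hle 1) ?_
    have h1 : ‖φ (mono 1)‖ * ‖φ (mono (-1))‖ = 1 := by
      rw [← norm_mul, hm]; simp [h0]
    nlinarith [hle 1, hle (-1), norm_nonneg (φ (mono 1)), norm_nonneg (φ (mono (-1)))]
  have hk : ∀ k, φ (mono k) = φ (mono 1) ^ k := by
    intro k
    induction k using Int.induction_on with
    | zero => simpa using h0
    | succ i ih => rw [← hm, ih, zpow_add_one₀ hz0]
    | pred i ih =>
      have := hm (-(i:ℤ) - 1) 1
      rw [sub_add_cancel, ih] at this
      rw [zpow_sub_one₀ hz0, ← this, mul_assoc, mul_inv_cancel₀ hz0, mul_one]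
  refine h _ hz ?_
  have hs := (hasSum_mono a).map φ (map_continuous φ)
  rw [hφ] at hs
  unfold ev
  rw [← hs.tsum_eq]
  refine tsum_congr fun k => ?_
  change a.c k * φ (mono 1) ^ k = φ (a.c k • mono k)
  rw [map_smul, smul_eq_mul, hk k]

end WAlg
end WienerAlgebra

section Factorization

open WAlg

/-- Membership of a function in the Wiener algebra, through its values on the circle. -/
def InW (F : ℂ → ℂ) : Prop := ∃ w : WAlg, ∀ z : ℂ, ‖z‖ = 1 → F z = ev z w

lemma InW.mul {F G : ℂ → ℂ} (hF : InW F) (hG : InW G) : InW fun z => F z * G z := by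
  obtain ⟨a, ha⟩ := hF
  obtain ⟨b, hb⟩ := hG
  exact ⟨a * b, fun z hz => by simp only [ev_mul hz, ha z hz, hb z hz]⟩

lemma InW.add {F G : ℂ → ℂ} (hF : InW F) (hG : InW G) : InW fun z => F z + G z := by
  obtain ⟨a, ha⟩ := hF
  obtain ⟨b, hb⟩ := hG
  exact ⟨a + b, fun z hz => by simp only [ev_add hz, ha z hz, hb z hz]⟩

lemma InW.const (c : ℂ) : InW fun _ => c :=
  ⟨c • 1, fun z _ => by rw [ev_smul, ev_one, mul_one]⟩

lemma InW.zpow (k : ℤ) : InW fun z => z ^ k := ⟨mono k, fun z _ => by rw [ev_mono]⟩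

lemma InW.exp {F : ℂ → ℂ} (hF : InW F) : InW fun z => Complex.exp (F z) := by
  obtain ⟨a, ha⟩ := hF
  exact ⟨NormedSpace.exp a, fun z hz => by simp only [ev_exp hz, ha z hz]⟩

lemma InW.summable {F : ℂ → ℂ} (hF : InW F) : Summable fun k : ℤ => ‖circleFourierCoeff F k‖ := by
  obtain ⟨a, ha⟩ := hF
  simp_rw [coeff_of_ev a F ha]
  exact a.summable_c

/-- The factorization with Wiener algebra membership. -/
def WFact (f : ℂ → ℂ) (κ : ℤ) : Prop :=
  ∃ Fp Fm : ℂ → ℂ, ∃ L : ℂ,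
    ContinuousOn Fp (closedBall 0 1) ∧
    DifferentiableOn ℂ Fp (ball 0 1) ∧
    (∀ z ∈ closedBall (0 : ℂ) 1, Fp z ≠ 0) ∧
    InW Fp ∧
    ContinuousOn Fm {z : ℂ | 1 ≤ ‖z‖} ∧
    DifferentiableOn ℂ Fm {z : ℂ | 1 < ‖z‖} ∧
    (∀ z : ℂ, 1 ≤ ‖z‖ → Fm z ≠ 0) ∧
    L ≠ 0 ∧
    Tendsto Fm (comap (fun z : ℂ => ‖z‖) atTop) (nhds L) ∧
    InW Fm ∧
    ∀ z : ℂ, ‖z‖ = 1 → f z = Fp z * z ^ κ * Fm z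

lemma WFact.toFact {f : ℂ → ℂ} {κ : ℤ} (h : WFact f κ) : WienerScalarFactorization f κ := by
  obtain ⟨Fp, Fm, L, h1, h2, h3, h4, h5, h6, h7, h8, h9, h10, h11⟩ := h
  exact ⟨Fp, Fm, L, h1, h2, h3, h4.summable, h5, h6, h7, h8, h9, h10.summable, h11⟩

lemma WFact.congr {f g : ℂ → ℂ} {κ : ℤ} (h : WFact f κ) (hfg : ∀ z : ℂ, ‖z‖ = 1 → g z = f z) :
    WFact g κ := by
  obtain ⟨Fp, Fm, L, h1, h2, h3, h4, h5, h6, h7, h8, h9, h10, h11⟩ := h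
  exact ⟨Fp, Fm, L, h1, h2, h3, h4, h5, h6, h7, h8, h9, h10,
    fun z hz => (hfg z hz).trans (h11 z hz)⟩

lemma WFact.mul {f g : ℂ → ℂ} {κ μ : ℤ} (hf : WFact f κ) (hg : WFact g μ) :
    WFact (fun z => f z * g z) (κ + μ) := by
  obtain ⟨Fp, Fm, L, h1, h2, h3, h4, h5, h6, h7, h8, h9, h10, h11⟩ := hf
  obtain ⟨Gp, Gm, M, k1, k2, k3, k4, k5, k6, k7, k8, k9, k10, k11⟩ := hg
  refine ⟨fun z => Fp z * Gp z, fun z => Fm z * Gm z, L * M, h1.mul k1, h2.mul k2,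
    fun z hz => mul_ne_zero (h3 z hz) (k3 z hz), h4.mul k4, h5.mul k5, h6.mul k6,
    fun z hz => mul_ne_zero (h7 z hz) (k7 z hz), mul_ne_zero h8 k8, h9.mul k9, h10.mul k10, ?_⟩
  intro z hz
  have hz0 : z ≠ 0 := by rintro rfl; simp at hz
  simp only
  rw [h11 z hz, k11 z hz, zpow_add₀ hz0]; ring

lemma WFact.const {c : ℂ} (hc : c ≠ 0) : WFact (fun _ => c) 0 :=
  ⟨fun _ => c, fun _ => 1, 1, continuousOn_const, differentiableOn_const _, fun _ _ => hc,
    InW.const c, continuousOn_const, differentiableOn_const _, fun _ _ => one_ne_zero, one_ne_zero,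
    tendsto_const_nhds, InW.const 1, fun z _ => by simp⟩

lemma WFact.zpow (k : ℤ) : WFact (fun z => z ^ k) k :=
  ⟨fun _ => 1, fun _ => 1, 1, continuousOn_const, differentiableOn_const _, fun _ _ => one_ne_zero,
    InW.const 1, continuousOn_const, differentiableOn_const _, fun _ _ => one_ne_zero, one_ne_zero,
    tendsto_const_nhds, InW.const 1, fun z _ => by simp⟩

lemma tendsto_inv_infty : Tendsto (fun z : ℂ => z⁻¹) (comap (fun z : ℂ => ‖z‖) atTop) (nhds 0) := by
  rw [comap_norm_atTop]; exact tendsto_inv₀_cobounded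

lemma norm_ge_ne_zero {z : ℂ} (hz : 1 ≤ ‖z‖) : z ≠ 0 := by
  rintro rfl; simp at hz; linarith

lemma WFact.linear {a : ℂ} (ha : ‖a‖ ≠ 1) : ∃ κ, WFact (fun z => z - a) κ := by
  rcases lt_or_gt_of_ne ha with h | h
  · refine ⟨1, fun _ => 1, fun z => 1 + (-a) * z ^ (-1 : ℤ), 1, continuousOn_const,
      differentiableOn_const _, fun _ _ => one_ne_zero, InW.const 1, ?_, ?_, ?_, one_ne_zero, ?_,
      (InW.const 1).add ((InW.const _).mul (InW.zpow _)), ?_⟩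
    · simp only [zpow_neg_one]
      exact continuousOn_const.add (continuousOn_const.mul
        (continuousOn_id.inv₀ fun z hz => norm_ge_ne_zero hz))
    · simp only [zpow_neg_one]
      exact (differentiableOn_const _).add ((differentiableOn_const _).mul
        (differentiableOn_id.inv fun z hz => norm_ge_ne_zero (le_of_lt hz)))
    · intro z hz h0
      have hz0 := norm_ge_ne_zero hz
      have : z = a := by
        simp only [zpow_neg_one] at h0
        field_simp at h0
        linear_combination h0
      rw [this] at hz; linarith
    · simp only [zpow_neg_one]
      simpa using (tendsto_const_nhds (x := (1:ℂ))).add (tendsto_inv_infty.const_mul (-a))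
    · intro z hz
      have hz0 := norm_ge_ne_zero hz.ge
      simp only [zpow_neg_one, zpow_one]
      field_simp; ring
  · refine ⟨0, fun z => z ^ (1 : ℤ) + (-a), fun _ => 1, 1, ?_, ?_, ?_,
      (InW.zpow _).add (InW.const _), continuousOn_const, differentiableOn_const _,
      fun _ _ => one_ne_zero, one_ne_zero, tendsto_const_nhds, InW.const 1, ?_⟩
    · simp only [zpow_one]; fun_prop
    · simp only [zpow_one]; fun_prop
    · intro z hz h0
      simp only [zpow_one] at h0
      have : z = a := by linear_combination h0
      rw [this] at hz; simp at hz; linarith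
    · intro z hz; simp [sub_eq_add_neg]

lemma WFact.prod (m : Multiset ℂ) (hm : ∀ a ∈ m, ‖a‖ ≠ 1) :
    ∃ κ, WFact (fun z => (m.map fun a => z - a).prod) κ := by
  induction m using Multiset.induction_on with
  | empty => exact ⟨0, by simpa using WFact.const one_ne_zero⟩
  | cons a m ih =>
    obtain ⟨κ, h⟩ := ih fun b hb => hm b (Multiset.mem_cons_of_mem hb)
    obtain ⟨μ, h'⟩ := WFact.linear (hm a (Multiset.mem_cons_self a m))
    exact ⟨μ + κ, by simpa using h'.mul h⟩

lemma WFact.poly (P : Polynomial ℂ) (hP : ∀ z : ℂ, ‖z‖ = 1 → P.eval z ≠ 0) :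
    ∃ κ, WFact (fun z => P.eval z) κ := by
  have hP0 : P ≠ 0 := by rintro rfl; exact hP 1 (by simp) (by simp)
  obtain ⟨κ, h⟩ := WFact.prod P.roots (fun a ha h1 => hP a h1 (Polynomial.isRoot_of_mem_roots ha))
  refine ⟨0 + κ, ((WFact.const (Polynomial.leadingCoeff_ne_zero.2 hP0)).mul h).congr fun z _ => ?_⟩
  exact (IsAlgClosed.splits P).eval_eq_prod_roots z

lemma WFact.laurent (s : Finset ℤ) (c : ℤ → ℂ)
    (h0 : ∀ z : ℂ, ‖z‖ = 1 → ∑ k ∈ s, c k * z ^ k ≠ 0) :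
    ∃ κ, WFact (fun z => ∑ k ∈ s, c k * z ^ k) κ := by
  obtain ⟨N, hN⟩ : ∃ N : ℤ, ∀ k ∈ s, 0 ≤ k + N := by
    refine ⟨∑ k ∈ s, |k|, fun k hk => ?_⟩
    have := Finset.single_le_sum (f := fun k : ℤ => |k|) (fun i _ => abs_nonneg i) hk
    have h2 := neg_abs_le k
    linarith
  let P : Polynomial ℂ := ∑ k ∈ s, Polynomial.C (c k) * Polynomial.X ^ (k + N).toNat
  have hP : ∀ z : ℂ, ‖z‖ = 1 → ∑ k ∈ s, c k * z ^ k = P.eval z * z ^ (-N) := by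
    intro z hz
    have hz0 := norm_ge_ne_zero hz.ge
    simp only [P, Polynomial.eval_finsetSum, Finset.sum_mul]
    refine Finset.sum_congr rfl fun k hk => ?_
    simp only [Polynomial.eval_mul, Polynomial.eval_C, Polynomial.eval_pow, Polynomial.eval_X]
    rw [mul_assoc, ← zpow_natCast, Int.toNat_of_nonneg (hN k hk), ← zpow_add₀ hz0]
    congr 2; ring
  obtain ⟨κ, h⟩ := WFact.poly P (fun z hz h1 => h0 z hz (by rw [hP z hz, h1, zero_mul]))
  exact ⟨κ + (-N), (h.mul (WFact.zpow (-N))).congr hP⟩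

lemma ps_continuousOn (b : ℕ → ℂ) (hb : Summable fun k => ‖b k‖) :
    ContinuousOn (fun z : ℂ => ∑' k, b k * z ^ k) (closedBall 0 1) := by
  refine continuousOn_tsum (fun i => by fun_prop) hb fun n x hx => ?_
  rw [norm_mul, norm_pow]
  exact mul_le_of_le_one_right (norm_nonneg _) (pow_le_one₀ (norm_nonneg _) (by simpa using hx))

lemma ps_differentiableOn (b : ℕ → ℂ) (hb : Summable fun k => ‖b k‖) :
    DifferentiableOn ℂ (fun z : ℂ => ∑' k, b k * z ^ k) (ball 0 1) := by
  refine Complex.differentiableOn_tsum_of_summable_norm hb (fun i => by fun_prop) isOpen_ball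
    fun n x hx => ?_
  rw [norm_mul, norm_pow]
  exact mul_le_of_le_one_right (norm_nonneg _) (pow_le_one₀ (norm_nonneg _)
    (by simpa using (ball_subset_closedBall hx)))

lemma ps_InW (b : ℕ → ℂ) (hb : Summable fun k => ‖b k‖) (e : ℤ) :
    InW (fun z : ℂ => ∑' k : ℕ, b k * (z ^ e) ^ k) := by
  have hs : Summable fun k => b k • mono (e * k) := by
    refine Summable.of_norm ?_
    simpa [norm_smul, norm_mono] using hb
  refine ⟨∑' k, b k • mono (e * k), fun z hz => ?_⟩
  have := hs.hasSum.map (evHom z hz) (evHom_continuous z hz)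
  refine Eq.trans ?_ this.tsum_eq
  refine tsum_congr fun k => ?_
  change _ = ev z (b k • mono (e * k))
  rw [ev_smul, ev_mono, zpow_mul, zpow_natCast]

lemma WFact.exp (g : WAlg) : WFact (fun z => Complex.exp (ev z g)) 0 := by
  have hp : Summable fun k : ℕ => ‖g.c k‖ :=
    g.summable_c.comp_injective Nat.cast_injective
  have hm : Summable fun k : ℕ => ‖g.c (-((k : ℤ) + 1))‖ :=
    g.summable_c.comp_injective (i := fun k : ℕ => -((k : ℤ) + 1)) (fun a b h => by simpa using h)
  set bp : ℕ → ℂ := fun k => g.c k with hbp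
  set bm : ℕ → ℂ := fun k => g.c (-((k : ℤ) + 1)) with hbm
  set Q : ℂ → ℂ := fun w => w * ∑' k : ℕ, bm k * w ^ k with hQ
  have hQc : ContinuousOn Q (closedBall 0 1) := continuousOn_id.mul (ps_continuousOn bm hm)
  have hQd : DifferentiableOn ℂ Q (ball 0 1) := differentiableOn_id.mul (ps_differentiableOn bm hm)
  refine ⟨fun z => Complex.exp (∑' k : ℕ, bp k * z ^ k), fun z => Complex.exp (Q z⁻¹), 1,
    (ps_continuousOn bp hp).cexp, (ps_differentiableOn bp hp).cexp,
    fun _ _ => Complex.exp_ne_zero _, ?_, ?_, ?_, fun _ _ => Complex.exp_ne_zero _, one_ne_zero,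
    ?_, ?_, ?_⟩
  · have := ps_InW bp hp 1
    simp only [zpow_one] at this
    exact this.exp
  · refine (hQc.comp (continuousOn_id.inv₀ fun z hz => norm_ge_ne_zero hz) ?_).cexp
    intro z hz
    simpa using inv_le_one_of_one_le₀ hz
  · refine (hQd.comp (differentiableOn_id.inv fun z hz => norm_ge_ne_zero (le_of_lt hz)) ?_).cexp
    intro z hz
    simpa using inv_lt_one_of_one_lt₀ hz
  · have h0 : ContinuousAt Q 0 := hQc.continuousAt (closedBall_mem_nhds 0 one_pos)
    have h1 : Tendsto Q (nhds 0) (nhds 0) := by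
      have := h0.tendsto
      simpa [hQ] using this
    have h2 := (Complex.continuous_exp.tendsto 0).comp (h1.comp tendsto_inv_infty)
    rw [Complex.exp_zero] at h2
    exact h2
  · have := ((InW.zpow (-1)).mul (ps_InW bm hm (-1))).exp
    simpa only [zpow_neg_one] using this
  · intro z hz
    have hz0 := norm_ge_ne_zero hz.ge
    simp only [zpow_zero, mul_one]
    rw [← Complex.exp_add]
    congr 1
    have hs := g.summable_term hz
    have h1 : Summable fun k : ℕ => g.c k * z ^ (k : ℤ) :=
      hs.comp_injective (i := fun k : ℕ => (k : ℤ)) Nat.cast_injective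
    have h2 : Summable fun k : ℕ => g.c (-((k : ℤ) + 1)) * z ^ (-((k : ℤ) + 1)) :=
      hs.comp_injective (i := fun k : ℕ => -((k : ℤ) + 1)) (fun a b h => by simpa using h)
    have h3 := HasSum.of_nat_of_neg_add_one (f := fun k : ℤ => g.c k * z ^ k) h1.hasSum h2.hasSum
    unfold ev
    rw [h3.tsum_eq]
    simp only [hQ, hbp, hbm]
    congr 1
    · rw [← tsum_mul_left]
      refine tsum_congr fun k => ?_
      have : z ^ (-((k : ℤ) + 1)) = z⁻¹ * z⁻¹ ^ k := by
        rw [zpow_neg, zpow_add_one₀ hz0, zpow_natCast, mul_inv, inv_pow, mul_comm]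
      rw [this]; ring

lemma exists_WFact (w : WAlg) (h : ∀ z : ℂ, ‖z‖ = 1 → ev z w ≠ 0) :
    ∃ κ, WFact (fun z => ev z w) κ := by
  obtain ⟨u, hu⟩ := isUnit_of_ev_ne_zero w h
  have hexp : Set.range (NormedSpace.exp : WAlg → WAlg) ∈ nhds (1 : WAlg) := by
    have h1 := (hasStrictFDerivAt_exp_zero (𝕂 := ℂ) (𝔸 := WAlg)).map_nhds_eq_of_surj
      (by exact LinearMap.range_eq_top.2 fun x => ⟨x, rfl⟩)
    rw [NormedSpace.exp_zero] at h1
    rw [← h1]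
    exact Filter.range_mem_map
  have hlim : Tendsto (fun s : Finset ℤ => ∑ k ∈ s, w.c k • mono k) atTop (nhds w) := hasSum_mono w
  have hinv : Tendsto (fun s : Finset ℤ => w * Ring.inverse (∑ k ∈ s, w.c k • mono k)) atTop
      (nhds 1) := by
    have h1 : Tendsto Ring.inverse (nhds w) (nhds (Ring.inverse w)) := by
      rw [← hu]; exact (NormedRing.inverse_continuousAt u).tendsto
    have h2 := (h1.comp hlim).const_mul w
    rwa [Ring.mul_inverse_cancel w ⟨u, hu⟩] at h2
  have hunit : ∀ᶠ s : Finset ℤ in atTop, IsUnit (∑ k ∈ s, w.c k • mono k) :=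
    hlim.eventually (Units.isOpen.mem_nhds (show w ∈ {x : WAlg | IsUnit x} from ⟨u, hu⟩))
  obtain ⟨s, ⟨g, hg⟩, hs⟩ := ((hinv.eventually hexp).and hunit).exists
  have hw : w = (∑ k ∈ s, w.c k • mono k) * NormedSpace.exp g := by
    rw [hg, mul_left_comm, Ring.mul_inverse_cancel _ hs, mul_one]
  have hsum : ∀ z : ℂ, ‖z‖ = 1 → ev z (∑ k ∈ s, w.c k • mono k) = ∑ k ∈ s, w.c k * z ^ k := by
    intro z hz
    have := map_sum (evHom z hz) (fun k => w.c k • mono k) s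
    refine this.trans (Finset.sum_congr rfl fun k _ => ?_)
    change ev z (w.c k • mono k) = _
    rw [ev_smul, ev_mono]
  have hev : ∀ z : ℂ, ‖z‖ = 1 → ev z w = (∑ k ∈ s, w.c k * z ^ k) * Complex.exp (ev z g) := by
    intro z hz
    rw [← ev_exp hz, ← hsum z hz, ← ev_mul hz, ← hw]
  obtain ⟨κ, hκ⟩ := WFact.laurent s w.c fun z hz h0 => h z hz (by rw [hev z hz, h0, zero_mul])
  exact ⟨κ + 0, (hκ.mul (WFact.exp g)).congr hev⟩

end Factorization

section Uniqueness

lemma WienerScalarFactorization.not_lt {f : ℂ → ℂ} {κ κ' : ℤ} (h : WienerScalarFactorization f κ)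
    (h' : WienerScalarFactorization f κ') : ¬ κ' < κ := by
  intro hlt
  obtain ⟨Fp, Fm, L, h1, h2, h3, -, h5, h6, h7, h8, h9, -, h11⟩ := h
  obtain ⟨Gp, Gm, M, k1, k2, k3, -, k5, k6, k7, k8, k9, -, k11⟩ := h'
  obtain ⟨n, hn⟩ : ∃ n : ℕ, κ = κ' + n := ⟨(κ - κ').toNat, by omega⟩
  have hn0 : n ≠ 0 := by omega
  let H : ℂ → ℂ := fun z => Fp z / Gp z * z ^ n
  let K : ℂ → ℂ := Function.update (fun w => Gm w⁻¹ / Fm w⁻¹) 0 (M / L)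
  have hH : Real.circleAverage H 0 1 = H 0 := by
    refine circleAverage_of_differentiable_on_off_countable Set.countable_empty ?_ ?_
    · rw [abs_one]
      exact (h1.div k1 k3).mul (by fun_prop)
    · rw [abs_one]
      intro z hz
      have hz := hz.1
      have hd : DifferentiableOn ℂ H (ball 0 1) :=
        (h2.div k2 fun z hz => k3 z (ball_subset_closedBall hz)).mul (by fun_prop)
      exact hd.differentiableAt (isOpen_ball.mem_nhds hz)
  have hK : Real.circleAverage K 0 1 = K 0 := by
    refine circleAverage_of_differentiable_on_off_countable (Set.countable_singleton 0) ?_ ?_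
    · rw [abs_one]
      refine continuousOn_update_iff.2 ⟨?_, fun _ => ?_⟩
      · have hmap : Set.MapsTo (fun w : ℂ => w⁻¹) (closedBall 0 1 \ {0}) {z : ℂ | 1 ≤ ‖z‖} := by
          intro w hw
          have hw0 : w ≠ 0 := hw.2
          have hw1 : ‖w‖ ≤ 1 := by simpa using hw.1
          simpa using (one_le_inv₀ (norm_pos_iff.2 hw0)).2 hw1
        have hi : ContinuousOn (fun w : ℂ => w⁻¹) (closedBall 0 1 \ {0}) :=
          continuousOn_id.inv₀ fun w hw => hw.2
        exact (k5.comp hi hmap).div (h5.comp hi hmap) fun w hw => h7 _ (hmap hw)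
      · have hi : Tendsto (fun w : ℂ => w⁻¹) (nhdsWithin 0 (closedBall 0 1 \ {0}))
            (comap (fun z : ℂ => ‖z‖) atTop) := by
          rw [comap_norm_atTop]
          exact tendsto_inv₀_nhdsNE_zero.mono_left (nhdsWithin_mono _ fun w hw => hw.2)
        exact (k9.comp hi).div (h9.comp hi) h8
    · rw [abs_one]
      rintro w ⟨hw, hw0⟩
      have hw0 : w ≠ 0 := hw0
      have hw1 : ‖w‖ < 1 := by simpa using hw
      have hwi : 1 < ‖w⁻¹‖ := by simpa using (one_lt_inv₀ (norm_pos_iff.2 hw0)).2 hw1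
      have ho : IsOpen {z : ℂ | 1 < ‖z‖} := isOpen_lt continuous_const continuous_norm
      have hd : DifferentiableAt ℂ (fun w => Gm w⁻¹ / Fm w⁻¹) w := by
        have hi : DifferentiableAt ℂ (fun w : ℂ => w⁻¹) w := differentiableAt_inv hw0
        have hG : DifferentiableAt ℂ Gm w⁻¹ := k6.differentiableAt (ho.mem_nhds hwi)
        have hF : DifferentiableAt ℂ Fm w⁻¹ := h6.differentiableAt (ho.mem_nhds hwi)
        exact (hG.fun_comp' w hi).fun_div (hF.fun_comp' w hi) (h7 _ hwi.le)
      refine hd.congr_of_eventuallyEq ?_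
      filter_upwards [isOpen_ne.mem_nhds hw0] with v hv
      exact Function.update_of_ne hv _ _
  have hHK : Real.circleAverage H 0 1 = Real.circleAverage (fun z => K z⁻¹) 0 1 := by
    refine Real.circleAverage_congr_sphere fun z hz => ?_
    have hz1 : ‖z‖ = 1 := by simpa using hz
    have hz0 : z ≠ 0 := by rintro rfl; simp at hz1
    have e : K z⁻¹ = Gm z / Fm z := by
      have := Function.update_of_ne (inv_ne_zero hz0) (M / L) (fun w => Gm w⁻¹ / Fm w⁻¹)
      rw [inv_inv] at this
      exact this
    rw [e]
    change Fp z / Gp z * z ^ n = _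
    have hq := (h11 z hz1).symm.trans (k11 z hz1)
    rw [hn, zpow_add₀ hz0, zpow_natCast] at hq
    have hzk : z ^ κ' ≠ 0 := zpow_ne_zero _ hz0
    have hg := k3 z (by simp [hz1])
    have hf := h7 z hz1.ge
    field_simp
    refine mul_left_cancel₀ hzk ?_
    linear_combination hq
  rw [Real.circleAverage_zero_one_congr_inv, hH, hK] at hHK
  have hK0 : K 0 = M / L := Function.update_self _ _ _
  have hH0 : H 0 = 0 := by simp [H, hn0]
  rw [hK0, hH0] at hHK
  exact div_ne_zero k8 h8 hHK.symm

end Uniqueness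

/-- Every nowhere-vanishing continuous function on the unit circle with
absolutely summable Fourier coefficients (i.e. every invertible element of the Wiener
algebra) admits a Birkhoff decomposition `f = F₊ · z^κ · F₋`, and the integer `κ` is
uniquely determined by `f`. -/
theorem stmt_7 (f : ℂ → ℂ) (hfc : ContinuousOn f {z : ℂ | ‖z‖ = 1})
    (hf0 : ∀ z : ℂ, ‖z‖ = 1 → f z ≠ 0)
    (hW : Summable fun k : ℤ => ‖circleFourierCoeff f k‖) :
    ∃ κ : ℤ, WienerScalarFactorization f κ ∧
      ∀ κ' : ℤ, WienerScalarFactorization f κ' → κ' = κ := by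
  let w : WAlg := WAlg.mk (circleFourierCoeff f) hW
  have hfw : ∀ z : ℂ, ‖z‖ = 1 → f z = WAlg.ev z w := series_of_summable f hfc hW
  obtain ⟨κ, hκ⟩ := exists_WFact w fun z hz => by rw [← hfw z hz]; exact hf0 z hz
  have hF := (hκ.congr hfw).toFact
  exact ⟨κ, hF, fun κ' h' => le_antisymm (not_lt.1 (h'.not_lt hF)) (not_lt.1 (hF.not_lt h'))⟩
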